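/- Let X be a compact Hausdorff space, M ≺ H(κ) countable with X ∈ M, L = 2^X ∩ M, and m ≥ 2. Then X is an m-C-space if and only if wL is an m-C-space. In particular (m = 2), X is weakly infinite dimensional if and only if wL is weakly infinite dimensional. -/

import Mathlib

open Set TopologicalSpace FirstOrder

universe u v

/-- `U` is a cover of `X` by open sets. -/
def IsOpenCover {X : Type u} [TopologicalSpace X] (U : Set (Set X)) : Prop :=
  (∀ s ∈ U, IsOpen s) ∧ ⋃₀ U = Set.univ

/-- `V` refines `U`: every member of `V` is contained in some member of `U`. -/
def Refines {X : Type u} (V U : Set (Set X)) : Prop :=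
  ∀ v ∈ V, ∃ u ∈ U, v ⊆ u

/-- `X` is a C-space (has property C): every sequence of open covers admits a sequence of
families of pairwise disjoint open sets, the `i`-th refining the `i`-th cover, whose union
covers `X`. -/
def IsCSpace (X : Type u) [TopologicalSpace X] : Prop :=
  ∀ U : ℕ → Set (Set X), (∀ i, IsOpenCover (U i)) →
    ∃ V : ℕ → Set (Set X),
      (∀ i, (∀ s ∈ V i, IsOpen s) ∧ (V i).PairwiseDisjoint id ∧ Refines (V i) (U i)) ∧
      (⋃ i, ⋃₀ (V i)) = Set.univ

/-- `X` is an `m`-C-space: property C restricted to `m`-element open covers. -/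
def IsMCSpace (m : ℕ) (X : Type u) [TopologicalSpace X] : Prop :=
  ∀ U : ℕ → Fin m → Set X, (∀ i j, IsOpen (U i j)) → (∀ i, (⋃ j, U i j) = Set.univ) →
    ∃ V : ℕ → Set (Set X),
      (∀ i, (∀ s ∈ V i, IsOpen s) ∧ (V i).PairwiseDisjoint id ∧ ∀ v ∈ V i, ∃ j, v ⊆ U i j) ∧
      (⋃ i, ⋃₀ (V i)) = Set.univ

/-- `L` is a separator between `A` and `B`: the complement of `L` splits into disjoint open
sets containing `A` and `B` respectively. -/
def IsSeparator {X : Type u} [TopologicalSpace X] (L A B : Set X) : Prop :=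
  ∃ U V : Set X, IsOpen U ∧ IsOpen V ∧ A ⊆ U ∧ B ⊆ V ∧ Disjoint U V ∧ L = (U ∪ V)ᶜ

/-- `X` is weakly infinite dimensional: every sequence of pairs of disjoint closed sets admits
separators with empty total intersection. -/
def WeaklyInfiniteDimensional (X : Type u) [TopologicalSpace X] : Prop :=
  ∀ A B : ℕ → Set X, (∀ i, IsClosed (A i)) → (∀ i, IsClosed (B i)) →
    (∀ i, Disjoint (A i) (B i)) →
    ∃ S : ℕ → Set X, (∀ i, IsSeparator (S i) (A i) (B i)) ∧ (⋂ i, S i) = ∅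

/-- An ultrafilter on a lattice `F` of subsets of `α` (in the Wallman sense): a proper filter
on `F` such that every member of `F` meeting all members of the filter belongs to it. -/
structure LUltra {α : Type u} (F : Set (Set α)) where
  sets : Set (Set α)
  sets_subset : sets ⊆ F
  univ_mem : Set.univ ∈ sets
  empty_notMem : ∅ ∉ sets
  inter_mem : ∀ a ∈ sets, ∀ b ∈ sets, a ∩ b ∈ sets
  superset_mem : ∀ a ∈ sets, ∀ b ∈ F, a ⊆ b → b ∈ sets
  ultra : ∀ a ∈ F, a ∉ sets → ∃ b ∈ sets, a ∩ b = ∅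

/-- The Wallman topology: the sets `â = {u : a ∈ u}`, `a ∈ F`, form a base for closed sets. -/
instance LUltra.instTopologicalSpace {α : Type u} (F : Set (Set α)) :
    TopologicalSpace (LUltra F) :=
  TopologicalSpace.generateFrom {s | ∃ a ∈ F, s = {u : LUltra F | a ∈ u.sets}ᶜ}

/-- `x ∈ H(κ)`: `x` hereditarily has cardinality `< κ` (for regular `κ` this agrees with
`|TC(x)| < κ`). -/
def HeredLt (κ : Cardinal.{1}) (x : ZFSet.{0}) : Prop :=
  ZFSet.mem_wf.fix (fun x ih => Cardinal.mk x.toSet < κ ∧ ∀ y, ∀ h : y ∈ x, ih y h) x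

/-- `ZFSet` as a structure for the language with one binary relation, interpreted as `∈`. -/
instance ZFSet.memLangStructure : FirstOrder.Language.graph.Structure ZFSet.{0} where
  funMap := fun {_} f => isEmptyElim f
  RelMap := fun {_} r => match r with | .adj => fun x => x 0 ∈ x 1

/-- `H(κ)` as a substructure of the universe of sets with membership. -/
def HKappa (κ : Cardinal.{1}) : FirstOrder.Language.graph.Substructure ZFSet.{0} where
  carrier := {x | HeredLt κ x}
  fun_mem := fun {_} f => isEmptyElim f

/-- `z` belongs to the elementary submodel `M ≺ H(κ)`. -/
def MemOf (κ : Cardinal.{1})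
    (M : FirstOrder.Language.graph.ElementarySubstructure (HKappa κ))
    (z : ZFSet.{0}) : Prop :=
  ∃ h : z ∈ HKappa κ, (⟨z, h⟩ : HKappa κ) ∈ M

/-- The ZF-set coding a subset `A` of (the extension of) the ZF-set `X`. -/
noncomputable def codeSet (X : ZFSet.{0}) (A : Set ↥X.toSet) : ZFSet.{0} :=
  ZFSet.sep (fun y => ∃ h : y ∈ X.toSet, (⟨y, h⟩ : ↥X.toSet) ∈ A) X

/-- The subset of `X` decoded from a ZF-set `t`. -/
def decodeSet (X : ZFSet.{0}) (t : ZFSet.{0}) : Set ↥X.toSet :=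
  {p : ↥X.toSet | (p : ZFSet) ∈ t}

/-- The ZF-set coding the topology of the space `X`: the set of codes of open subsets. -/
noncomputable def opensZ (X : ZFSet.{0}) [TopologicalSpace ↥X.toSet] : ZFSet.{0} :=
  ZFSet.sep (fun t => IsOpen (decodeSet X t)) X.powerset

/-- The lattice `L = 2^X ∩ M`: the closed subsets of `X` whose codes belong to `M`. -/
def Lfam (X : ZFSet.{0}) [TopologicalSpace ↥X.toSet] (κ : Cardinal.{1})
    (M : FirstOrder.Language.graph.ElementarySubstructure (HKappa κ)) :
    Set (Set ↥X.toSet) :=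
  {A | IsClosed A ∧ MemOf κ M (codeSet X A)}

/-!
For a compact space the `m`-C property is a finitary statement about any base for the closed sets
that is closed under finite intersections: passing to complements, an open cover becomes a tuple of
closed sets with empty intersection, a disjoint shrinking becomes a codisjoint expansion of that
tuple, and by compactness finitely many expansions already have empty intersection. As `L` is
disjunctive, this property of the closed base of `wL` is the same as the property of `L` itself, so
it remains to compare `L` with the lattice of all closed subsets of `X`.

Given a sequence in `L`, the expansions found in `X` are finitely many closed sets, and elementarity
finds such sets in `L`. Conversely, a sequence showing that `X` fails to be an `m`-C-space need not
belong to `M`. It is replaced by the set of the families `Oₙ` of all remainders obtainable after `n`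
expansions. The relevant property of this set, that every `O` in it admits a tuple all of whose
expansions lead from `O` to a further member, is first order, so such a set can be found in `M`; a
failing sequence in `L` is then built by choosing tuples and families in `M` one step at a time.
-/

section Covers

open scoped Function

variable {Y : Type u} {ι : Type*}

/-- Complements turn an `m`-element open cover `U` and a disjoint open shrinking of it into a family
`a = Uᶜ` with empty intersection and a codisjoint expansion of `a`. -/
def IsCodisjointExpansion (a b : ι → Set Y) : Prop :=
  a ≤ b ∧ Pairwise (Codisjoint on b)

/-- What is left uncovered by the complements of the members of the first `n` families. -/
def remainder (b : ℕ → ι → Set Y) (n : ℕ) : Set Y :=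
  ⋂ i < n, ⋂ j, b i j

/-- The `m`-C property of a lattice `F` of subsets, stated for `F` in the role of the closed sets.
Finitely many families suffice, as is the case for closed subsets of a compact space. -/
def IsMCLattice (m : ℕ) (F : Set (Set Y)) : Prop :=
  ∀ a : ℕ → Fin m → Set Y, (∀ i j, a i j ∈ F) → (∀ i, ⋂ j, a i j = ∅) →
    ∃ b : ℕ → Fin m → Set Y, (∀ i j, b i j ∈ F) ∧ (∀ i, IsCodisjointExpansion (a i) (b i)) ∧
      ∃ n, remainder b n = ∅

theorem isCodisjointExpansion_univ (a : ι → Set Y) : IsCodisjointExpansion a fun _ => univ :=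
  ⟨fun _ => subset_univ _, fun _ _ _ => codisjoint_top_left⟩

theorem remainder_zero (b : ℕ → ι → Set Y) : remainder b 0 = univ := by
  simp [remainder]

theorem remainder_succ (b : ℕ → ι → Set Y) (n : ℕ) :
    remainder b (n + 1) = remainder b n ∩ ⋂ j, b n j :=
  biInter_lt_succ _ n

theorem remainder_congr {b b' : ℕ → ι → Set Y} {n : ℕ} (h : ∀ i < n, b i = b' i) :
    remainder b n = remainder b' n :=
  iInter₂_congr fun i hi => by rw [h i hi]

theorem mem_remainder {b : ℕ → ι → Set Y} {n : ℕ} {x : Y} :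
    x ∈ remainder b n ↔ ∀ i < n, ∀ j, x ∈ b i j := by
  simp only [remainder, mem_iInter]

theorem disjoint_compl_compl_iff_codisjoint {α : Type*} [BooleanAlgebra α] {a b : α} :
    Disjoint aᶜ bᶜ ↔ Codisjoint a b := by
  rw [disjoint_compl_left_iff, ← codisjoint_iff_compl_le_left]

theorem codisjoint_iff_union_eq_univ {a b : Set Y} : Codisjoint a b ↔ a ∪ b = univ :=
  codisjoint_iff

theorem iInter_mem_of_finiteInter [Finite ι] {F : Set (Set Y)} (hF : FiniteInter F) {f : ι → Set Y}
    (hf : ∀ i, f i ∈ F) : ⋂ i, f i ∈ F := by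
  have h := hF.finiteInter_mem (finite_range f).toFinset
    (by simpa only [Finite.coe_toFinset] using range_subset_iff.2 hf)
  rwa [Finite.coe_toFinset, sInter_range] at h

variable [TopologicalSpace Y]

theorem isMCSpace_iff_exists_disjoint_shrinking {m : ℕ} :
    IsMCSpace m Y ↔ ∀ U : ℕ → Fin m → Set Y, (∀ i j, IsOpen (U i j)) → (∀ i, ⋃ j, U i j = univ) →
      ∃ W : ℕ → Fin m → Set Y, (∀ i j, IsOpen (W i j)) ∧ (∀ i j, W i j ⊆ U i j) ∧
        (∀ i, Pairwise (Disjoint on W i)) ∧ ⋃ i, ⋃ j, W i j = univ := by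
  refine forall₃_congr fun U _ _ => ⟨?_, ?_⟩
  · rintro ⟨V, hV, hVcover⟩
    choose J hJ using fun i => (hV i).2.2
    refine ⟨fun i j => ⋃ (v) (hv : v ∈ V i) (_ : J i v hv = j), v, fun i j =>
      isOpen_iUnion fun v => isOpen_iUnion fun hv => isOpen_iUnion fun _ => (hV i).1 v hv,
      fun i j => ?_, fun i j k hjk => disjoint_left.2 fun x hxj hxk => ?_, ?_⟩
    · simpa only [iUnion_subset_iff] using fun v hv hvj => hvj ▸ hJ i v hv
    · simp only [mem_iUnion] at hxj hxk
      obtain ⟨⟨v, hv, rfl, hxv⟩, w, hw, rfl, hxw⟩ := hxj, hxk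
      refine disjoint_left.1 ((hV i).2.1 hv hw fun hvw => hjk ?_) hxv hxw
      subst hvw
      rfl
    · refine eq_univ_of_forall fun x => ?_
      obtain ⟨i, v, hv, hxv⟩ := mem_iUnion.1 (hVcover ▸ mem_univ x)
      exact mem_iUnion₂.2 ⟨i, J i v hv, mem_iUnion₂.2 ⟨v, hv, mem_iUnion.2 ⟨rfl, hxv⟩⟩⟩
  · rintro ⟨W, hW, hWU, hWdisj, hWcover⟩
    refine ⟨fun i => range (W i), fun i => ⟨forall_mem_range.2 (hW i),
      (hWdisj i).range_pairwise, forall_mem_range.2 fun j => ⟨j, hWU i j⟩⟩, ?_⟩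
    simpa only [sUnion_range] using hWcover

theorem exists_isOpen_disjoint_closure [NormalSpace Y] {a b : Set Y} (ha : IsClosed a)
    (hb : IsClosed b) (hab : Disjoint a b) :
    ∃ p q : Set Y, IsOpen p ∧ IsOpen q ∧ a ⊆ p ∧ b ⊆ q ∧ Disjoint (closure p) (closure q) := by
  obtain ⟨p, hp, hap, hpb⟩ :=
    normal_exists_closure_subset ha hb.isOpen_compl hab.subset_compl_right
  obtain ⟨q, hq, hbq, hqp⟩ :=
    normal_exists_closure_subset hb isClosed_closure.isOpen_compl (subset_compl_comm.1 hpb)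
  exact ⟨p, q, hp, hq, hap, hbq, (subset_compl_iff_disjoint_right.1 hqp).symm⟩

theorem IsMCSpace.weaklyInfiniteDimensional [NormalSpace Y] (h : IsMCSpace 2 Y) :
    WeaklyInfiniteDimensional Y := by
  intro A B hA hB hAB
  choose P Q hP hQ hAP hBQ hPQ using
    fun i => exists_isOpen_disjoint_closure (hA i) (hB i) (hAB i)
  obtain ⟨W, hW, hWU, hWdisj, hWcover⟩ := isMCSpace_iff_exists_disjoint_shrinking.1 h
    (fun i => ![(closure (Q i))ᶜ, (closure (P i))ᶜ])
    (fun i => by simp [Fin.forall_fin_two])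
    (fun i => iUnion_eq_univ_iff.2 fun x => Fin.exists_fin_two.2
      (not_and_or.1 fun hx => disjoint_left.1 (hPQ i) hx.2 hx.1))
  have hWQ (i) : Disjoint (W i 0) (Q i) :=
    (subset_compl_iff_disjoint_right.1 (hWU i 0)).mono_right subset_closure
  have hWP (i) : Disjoint (P i) (W i 1) :=
    (subset_compl_iff_disjoint_right.1 (hWU i 1)).symm.mono_left subset_closure
  refine ⟨fun i => (P i ∪ W i 0 ∪ (Q i ∪ W i 1))ᶜ, fun i => ⟨P i ∪ W i 0, Q i ∪ W i 1,
    (hP i).union (hW i 0), (hQ i).union (hW i 1), subset_union_of_subset_left (hAP i) _,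
    subset_union_of_subset_left (hBQ i) _, ?_, rfl⟩, ?_⟩
  · simp only [disjoint_union_left, disjoint_union_right]
    exact ⟨⟨(hPQ i).mono subset_closure subset_closure, hWQ i⟩, hWP i, hWdisj i zero_ne_one⟩
  · rw [← compl_iUnion, compl_empty_iff, eq_univ_iff_forall]
    intro x
    obtain ⟨i, j, hx⟩ := mem_iUnion₂.1 (hWcover ▸ mem_univ x)
    refine mem_iUnion.2 ⟨i, ?_⟩
    fin_cases j
    exacts [.inl (.inr hx), .inr (.inr hx)]

theorem WeaklyInfiniteDimensional.isMCSpace_two (h : WeaklyInfiniteDimensional Y) :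
    IsMCSpace 2 Y := by
  refine isMCSpace_iff_exists_disjoint_shrinking.2 fun U hU hUcover => ?_
  have hdisj (i) : Disjoint (U i 0)ᶜ (U i 1)ᶜ := disjoint_left.2 fun x hx₀ hx₁ =>
    (Fin.exists_fin_two.1 (iUnion_eq_univ_iff.1 (hUcover i) x)).elim hx₀ hx₁
  obtain ⟨S, hS, hSempty⟩ := h (fun i => (U i 0)ᶜ) (fun i => (U i 1)ᶜ)
    (fun i => (hU i 0).isClosed_compl) (fun i => (hU i 1).isClosed_compl) hdisj
  choose P Q hP hQ hUP hUQ hPQ hSeq using hS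
  refine ⟨fun i => ![Q i, P i], fun i => ?_, fun i => ?_, fun i => ?_, ?_⟩
  · exact Fin.forall_fin_two.2 ⟨hQ i, hP i⟩
  · exact Fin.forall_fin_two.2
      ⟨(hPQ i).symm.subset_compl_right.trans (compl_subset_comm.1 (hUP i)),
        (hPQ i).subset_compl_right.trans (compl_subset_comm.1 (hUQ i))⟩
  · rintro j k hjk
    fin_cases j <;> fin_cases k
    exacts [absurd rfl hjk, (hPQ i).symm, hPQ i, absurd rfl hjk]
  · refine eq_univ_of_forall fun x => ?_
    obtain ⟨i, hi⟩ : ∃ i, x ∉ S i := by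
      simpa only [mem_iInter, not_forall] using eq_empty_iff_forall_notMem.1 hSempty x
    rw [hSeq, notMem_compl_iff] at hi
    exact mem_iUnion₂.2 ⟨i, Fin.exists_fin_two.2 hi.symm⟩

theorem isMCSpace_two_iff_weaklyInfiniteDimensional [NormalSpace Y] :
    IsMCSpace 2 Y ↔ WeaklyInfiniteDimensional Y :=
  ⟨IsMCSpace.weaklyInfiniteDimensional, WeaklyInfiniteDimensional.isMCSpace_two⟩

theorem isClosed_of_isTopologicalBasis_compl {B : Set (Set Y)}
    (hB : IsTopologicalBasis (compl '' B)) {b : Set Y} (hb : b ∈ B) : IsClosed b :=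
  isOpen_compl_iff.1 (hB.isOpen (mem_image_of_mem _ hb))

variable [CompactSpace Y] {B : Set (Set Y)}

theorem exists_swelling_of_iInter_eq_empty (hfin : FiniteInter B)
    (hB : IsTopologicalBasis (compl '' B)) {c : ι → Set Y} (hc : ∀ i, IsClosed (c i))
    (hempty : ⋂ i, c i = ∅) :
    ∃ b : ι → Set Y, (∀ i, b i ∈ B) ∧ c ≤ b ∧ ∃ s : Finset ι, ⋂ i ∈ s, b i = ∅ := by
  classical
  have hsup : ⋂ k : {k : ι × Set Y // k.2 ∈ B ∧ c k.1 ⊆ k.2}, k.1.2 = ∅ := by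
    refine eq_empty_of_forall_notMem fun x hx => ?_
    obtain ⟨i, hi⟩ : ∃ i, x ∉ c i := by
      simpa only [mem_iInter, not_forall] using eq_empty_iff_forall_notMem.1 hempty x
    obtain ⟨_, ⟨b, hb, rfl⟩, hxb, hbc⟩ := hB.exists_subset_of_mem_open hi (hc i).isOpen_compl
    exact hxb (mem_iInter.1 hx ⟨(i, b), hb, compl_subset_compl.1 hbc⟩)
  obtain ⟨t, ht⟩ := isCompact_univ.elim_finite_subfamily_closed _
    (fun k => isClosed_of_isTopologicalBasis_compl hB k.2.1) ((univ_inter _).trans hsup)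
  refine ⟨fun i => ⋂ k : {k : t // k.1.1.1 = i}, k.1.1.1.2,
    fun i => iInter_mem_of_finiteInter hfin fun k => k.1.1.2.1,
    fun i => subset_iInter ?_, t.image fun k => k.1.1, ?_⟩
  · rintro ⟨k, rfl⟩
    exact k.1.2.2
  rw [univ_inter] at ht
  refine subset_empty_iff.1 (Subset.trans ?_ ht.subset)
  exact subset_iInter₂ fun k hk => (biInter_subset_of_mem (Finset.mem_image_of_mem _ hk)).trans
    (iInter_subset (fun l : {l : t // l.1.1.1 = k.1.1} => l.1.1.1.2) ⟨⟨k, hk⟩, rfl⟩)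

theorem IsMCSpace.isMCLattice (hfin : FiniteInter B) (hB : IsTopologicalBasis (compl '' B)) {m : ℕ}
    (h : IsMCSpace m Y) : IsMCLattice m B := by
  intro a ha haempty
  obtain ⟨W, hW, hWa, hWdisj, hWcover⟩ := isMCSpace_iff_exists_disjoint_shrinking.1 h
    (fun i j => (a i j)ᶜ)
    (fun i j => (isClosed_of_isTopologicalBasis_compl hB (ha i j)).isOpen_compl)
    (fun i => by rw [← compl_iInter, haempty, compl_empty])
  obtain ⟨b, hb, hWb, s, hs⟩ := exists_swelling_of_iInter_eq_empty hfin hB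
    (c := fun k : ℕ × Fin m => (W k.1 k.2)ᶜ) (fun k => (hW k.1 k.2).isClosed_compl)
    (by rw [← compl_iUnion, iUnion_prod', hWcover, compl_univ])
  refine ⟨fun i j => b (i, j), fun i j => hb _,
    fun i => ⟨fun j => (subset_compl_comm.1 (hWa i j)).trans (hWb (i, j)), fun j k hjk => ?_⟩,
    s.sup Prod.fst + 1, subset_empty_iff.1 ?_⟩
  · refine Codisjoint.mono (hWb (i, j)) (hWb (i, k)) (disjoint_compl_compl_iff_codisjoint.1 ?_)
    simpa only [compl_compl] using hWdisj i hjk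
  · refine Subset.trans (fun x hx => mem_iInter₂.2 fun k hk => ?_) hs.subset
    exact mem_remainder.1 hx k.1 (Nat.lt_succ_of_le (Finset.le_sup (f := Prod.fst) hk)) k.2

theorem IsMCLattice.isMCSpace (hfin : FiniteInter B) (hB : IsTopologicalBasis (compl '' B)) {m : ℕ}
    (h : IsMCLattice m B) : IsMCSpace m Y := by
  refine isMCSpace_iff_exists_disjoint_shrinking.2 fun U hU hUcover => ?_
  have hswell (i) : ∃ a : Fin m → Set Y, (∀ j, a j ∈ B) ∧ (∀ j, (U i j)ᶜ ⊆ a j) ∧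
      ⋂ j, a j = ∅ := by
    obtain ⟨a, ha, hUa, s, hs⟩ := exists_swelling_of_iInter_eq_empty hfin hB
      (fun j => (hU i j).isClosed_compl) (by rw [← compl_iUnion, hUcover, compl_univ])
    exact ⟨a, ha, hUa, subset_empty_iff.1
      ((subset_iInter₂ fun j _ => iInter_subset a j).trans hs.subset)⟩
  choose a ha hUa haempty using hswell
  obtain ⟨b, hb, hab, n, hn⟩ := h a ha haempty
  refine ⟨fun i j => (b i j)ᶜ,
    fun i j => (isClosed_of_isTopologicalBasis_compl hB (hb i j)).isOpen_compl,
    fun i j => compl_subset_comm.1 ((hUa i j).trans ((hab i).1 j)),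
    fun i j k hjk => disjoint_compl_compl_iff_codisjoint.2 ((hab i).2 hjk), ?_⟩
  simp only [← compl_iInter, compl_univ_iff]
  exact subset_empty_iff.1 ((subset_iInter₂ fun i _ => iInter_subset _ i).trans hn.subset)

theorem isMCSpace_iff_isMCLattice (hfin : FiniteInter B) (hB : IsTopologicalBasis (compl '' B))
    {m : ℕ} : IsMCSpace m Y ↔ IsMCLattice m B :=
  ⟨IsMCSpace.isMCLattice hfin hB, IsMCLattice.isMCSpace hfin hB⟩

theorem isMCSpace_iff_isMCLattice_isClosed {m : ℕ} :
    IsMCSpace m Y ↔ IsMCLattice m {c : Set Y | IsClosed c} := by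
  refine isMCSpace_iff_isMCLattice ⟨isClosed_univ, fun _ ha _ hb => ha.inter hb⟩ ?_
  convert isTopologicalBasis_opens (α := Y) using 1
  rw [compl_image]
  exact ext fun c => isClosed_compl_iff

end Covers

section Wallman

variable {α : Type u} {ι : Type*} {F : Set (Set α)} {a b : Set α}

/-- Bounded sublattices of the power set of `α`. -/
structure IsSetLattice (F : Set (Set α)) : Prop extends FiniteInter F where
  empty_mem : ∅ ∈ F
  union_mem : ∀ a ∈ F, ∀ b ∈ F, a ∪ b ∈ F

/-- Disjunctive families, on which the Wallman representation `a ↦ hat F a` is faithful. -/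
def IsDisjunctive (F : Set (Set α)) : Prop :=
  ∀ a ∈ F, ∀ b ∈ F, ¬a ⊆ b → ∃ c ∈ F, c.Nonempty ∧ c ⊆ a ∧ Disjoint c b

/-- Normal lattices, stated for the members of `F` in the role of the closed sets. -/
def IsNormalLattice (F : Set (Set α)) : Prop :=
  ∀ a ∈ F, ∀ b ∈ F, Disjoint a b → ∃ c ∈ F, ∃ d ∈ F, Codisjoint c d ∧ Disjoint a c ∧ Disjoint b d

/-- The basic closed set `â` of the Wallman space of `F`. -/
def hat (F : Set (Set α)) (a : Set α) : Set (LUltra F) :=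
  {u | a ∈ u.sets}

theorem exists_maximal_neBot_generate {S : Set (Set α)} (hSF : S ⊆ F)
    (hS : (Filter.generate S).NeBot) :
    ∃ W, S ⊆ W ∧ Maximal (fun W => W ⊆ F ∧ (Filter.generate W).NeBot) W := by
  refine zorn_subset_nonempty {W | W ⊆ F ∧ (Filter.generate W).NeBot} (fun c hc hchain hne => ?_)
    S ⟨hSF, hS⟩
  refine ⟨⋃₀ c, ⟨sUnion_subset fun w hw => (hc hw).1,
    Filter.generate_neBot_iff.2 fun t htc ht => ?_⟩, fun w => subset_sUnion_of_mem⟩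
  obtain ⟨w, hw, htw⟩ := hchain.directedOn.exists_mem_subset_of_finite_of_subset_sUnion hne ht htc
  exact Filter.generate_neBot_iff.1 (hc hw).2 t htw ht

theorem mem_of_maximal_neBot_generate {W : Set (Set α)}
    (hW : Maximal (fun W => W ⊆ F ∧ (Filter.generate W).NeBot) W) (ha : a ∈ F)
    (haW : (Filter.generate W ⊓ Filter.principal a).NeBot) : a ∈ W := by
  refine hW.le_of_ge ⟨insert_subset ha hW.prop.1, ?_⟩ (subset_insert a W) (mem_insert a W)
  rwa [insert_eq, Filter.generate_union, Filter.generate_singleton, inf_comm]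

namespace LUltra

theorem exists_subset_sets (hF : FiniteInter F) {S : Set (Set α)} (hSF : S ⊆ F)
    (hS : (Filter.generate S).NeBot) : ∃ u : LUltra F, S ⊆ u.sets := by
  obtain ⟨W, hSW, hW⟩ := exists_maximal_neBot_generate hSF hS
  have hWne := hW.prop.2
  have hmem {a : Set α} (ha : a ∈ F) (haW : a ∈ Filter.generate W) : a ∈ W :=
    mem_of_maximal_neBot_generate hW ha
      (by rwa [inf_eq_left.2 (Filter.le_principal_iff.2 haW)])
  have hgen {a : Set α} (ha : a ∈ W) : a ∈ Filter.generate W := .basic ha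
  refine ⟨⟨W, hW.prop.1, hmem hF.univ_mem Filter.univ_mem,
    fun h => Filter.empty_notMem _ (hgen h),
    fun a ha b hb => hmem (hF.inter_mem (hW.prop.1 ha) (hW.prop.1 hb))
      (Filter.inter_mem (hgen ha) (hgen hb)),
    fun a ha b hb hab => hmem hb (Filter.mem_of_superset (hgen ha) hab), fun a ha haW => ?_⟩, hSW⟩
  have hbot : Filter.generate W ⊓ Filter.principal a = ⊥ :=
    Filter.not_neBot.1 fun h => haW (mem_of_maximal_neBot_generate hW ha h)
  obtain ⟨t, htW, ht, hta⟩ := Filter.mem_generate_iff.1 (Filter.inf_principal_eq_bot.1 hbot)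
  refine ⟨⋂₀ t, hmem ?_ ?_, ?_⟩
  · simpa only [ht.coe_toFinset] using
      hF.finiteInter_mem ht.toFinset (by simpa only [ht.coe_toFinset] using htW.trans hW.prop.1)
  · exact (Filter.sInter_mem ht).2 fun s hs => hgen (htW hs)
  · exact disjoint_iff_inter_eq_empty.1 (subset_compl_iff_disjoint_left.1 hta)

theorem finiteInter_sets (u : LUltra F) : FiniteInter u.sets :=
  ⟨u.univ_mem, u.inter_mem⟩

theorem notMem_of_disjoint (u : LUltra F) (ha : a ∈ u.sets) (hab : Disjoint a b) : b ∉ u.sets :=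
  fun hb => u.empty_notMem (hab.inter_eq ▸ u.inter_mem a ha b hb)

theorem eq_of_sets_subset {u v : LUltra F} (h : u.sets ⊆ v.sets) : u = v := by
  have hsets : u.sets = v.sets := by
    refine h.antisymm fun a ha => ?_
    by_contra hau
    obtain ⟨b, hb, hab⟩ := u.ultra a (v.sets_subset ha) hau
    exact v.notMem_of_disjoint ha (disjoint_iff_inter_eq_empty.2 hab) (h hb)
  cases u
  congr

theorem union_mem_iff (hF : IsSetLattice F) (u : LUltra F) (ha : a ∈ F) (hb : b ∈ F) :
    a ∪ b ∈ u.sets ↔ a ∈ u.sets ∨ b ∈ u.sets := by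
  have hab := hF.union_mem a ha b hb
  refine ⟨fun h => ?_, fun h => h.elim (fun ha => u.superset_mem a ha _ hab subset_union_left)
    fun hb => u.superset_mem b hb _ hab subset_union_right⟩
  by_contra! hcon
  obtain ⟨c, hc, hac⟩ := u.ultra a ha hcon.1
  obtain ⟨d, hd, hbd⟩ := u.ultra b hb hcon.2
  refine u.notMem_of_disjoint (u.inter_mem c hc d hd) ?_ h
  rw [← disjoint_iff_inter_eq_empty] at hac hbd
  exact disjoint_union_right.2
    ⟨hac.symm.mono_left inter_subset_left, hbd.symm.mono_left inter_subset_right⟩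

end LUltra

theorem hat_univ : hat F univ = univ :=
  eq_univ_of_forall LUltra.univ_mem

theorem hat_empty : hat F ∅ = ∅ :=
  eq_empty_of_forall_notMem LUltra.empty_notMem

theorem hat_inter (ha : a ∈ F) (hb : b ∈ F) : hat F (a ∩ b) = hat F a ∩ hat F b :=
  ext fun u => ⟨fun h => ⟨u.superset_mem _ h a ha inter_subset_left,
    u.superset_mem _ h b hb inter_subset_right⟩, fun h => u.inter_mem a h.1 b h.2⟩

theorem hat_union (hF : IsSetLattice F) (ha : a ∈ F) (hb : b ∈ F) :
    hat F (a ∪ b) = hat F a ∪ hat F b :=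
  ext fun u => u.union_mem_iff hF ha hb

theorem hat_iInter [Finite ι] {f : ι → Set α} (hf : ∀ i, f i ∈ F) :
    hat F (⋂ i, f i) = ⋂ i, hat F (f i) := by
  refine ext fun u => ⟨fun h => mem_iInter.2 fun i => ?_, fun h => ?_⟩
  · exact u.superset_mem _ h _ (hf i) (iInter_subset f i)
  · exact iInter_mem_of_finiteInter u.finiteInter_sets (mem_iInter.1 h)

theorem hat_subset_hat_iff (hfin : FiniteInter F) (hdis : IsDisjunctive F) (ha : a ∈ F)
    (hb : b ∈ F) : hat F a ⊆ hat F b ↔ a ⊆ b := by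
  refine ⟨fun h => ?_, fun h u hu => u.superset_mem a hu b hb h⟩
  by_contra hab
  obtain ⟨c, hc, hne, hca, hcb⟩ := hdis a ha b hb hab
  obtain ⟨u, hu⟩ := LUltra.exists_subset_sets hfin (singleton_subset_iff.2 hc)
    (by rwa [Filter.generate_singleton, Filter.principal_neBot_iff])
  have hcu : c ∈ u.sets := hu rfl
  exact u.notMem_of_disjoint hcu hcb (h (u.superset_mem c hcu a ha hca))

theorem isClosed_hat (ha : a ∈ F) : IsClosed (hat F a) :=
  ⟨.basic _ ⟨a, ha, rfl⟩⟩

theorem compactSpace_lUltra (hF : FiniteInter F) : CompactSpace (LUltra F) := by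
  refine ⟨isCompact_generateFrom rfl fun P hP hcover => ?_⟩
  have hbot : ¬(Filter.generate {a ∈ F | (hat F a)ᶜ ∈ P}).NeBot := fun hne => by
    obtain ⟨u, hu⟩ := LUltra.exists_subset_sets hF (sep_subset _ _) hne
    obtain ⟨s, hs, hus⟩ := hcover (mem_univ u)
    obtain ⟨a, ha, rfl⟩ := hP hs
    exact hus (hu ⟨ha, hs⟩)
  rw [Filter.generate_neBot_iff] at hbot
  push Not at hbot
  obtain ⟨t, htS, ht, htempty⟩ := hbot
  refine ⟨(fun a => (hat F a)ᶜ) '' t, image_subset_iff.2 fun a ha => (htS ha).2, ht.image _,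
    fun u _ => ?_⟩
  by_contra hu
  have htu : t ⊆ u.sets := fun a ha => not_not.1 fun hau => hu ⟨_, mem_image_of_mem _ ha, hau⟩
  have hsInter := u.finiteInter_sets.finiteInter_mem ht.toFinset
    (by simpa only [ht.coe_toFinset] using htu)
  rw [ht.coe_toFinset, htempty] at hsInter
  exact u.empty_notMem hsInter

theorem t2Space_lUltra (hF : IsSetLattice F) (hnormal : IsNormalLattice F) :
    T2Space (LUltra F) := by
  refine ⟨fun u v huv => ?_⟩
  obtain ⟨a, hau, hav⟩ := not_subset.1 (mt LUltra.eq_of_sets_subset huv)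
  have haF := u.sets_subset hau
  obtain ⟨b, hbv, hab⟩ := v.ultra a haF hav
  obtain ⟨c, hc, d, hd, hcd, hac, hbd⟩ :=
    hnormal a haF b (v.sets_subset hbv) (disjoint_iff_inter_eq_empty.2 hab)
  refine ⟨(hat F c)ᶜ, (hat F d)ᶜ, (isClosed_hat hc).isOpen_compl, (isClosed_hat hd).isOpen_compl,
    u.notMem_of_disjoint hau hac, v.notMem_of_disjoint hbv hbd, ?_⟩
  rw [disjoint_compl_compl_iff_codisjoint, codisjoint_iff_union_eq_univ, ← hat_union hF hc hd,
    codisjoint_iff_union_eq_univ.1 hcd, hat_univ]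

theorem finiteInter_image_hat (hF : FiniteInter F) : FiniteInter (hat F '' F) := by
  refine ⟨⟨univ, hF.univ_mem, hat_univ⟩, ?_⟩
  rintro _ ⟨a, ha, rfl⟩ _ ⟨b, hb, rfl⟩
  exact ⟨a ∩ b, hF.inter_mem ha hb, hat_inter ha hb⟩

theorem isTopologicalBasis_compl_image_hat (hF : IsSetLattice F) :
    IsTopologicalBasis (compl '' (hat F '' F)) := by
  refine ⟨?_, ?_, ?_⟩
  · rintro _ ⟨_, ⟨a, ha, rfl⟩, rfl⟩ _ ⟨_, ⟨b, hb, rfl⟩, rfl⟩ u hu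
    refine ⟨(hat F (a ∪ b))ᶜ, ⟨_, ⟨a ∪ b, hF.union_mem a ha b hb, rfl⟩, rfl⟩, ?_⟩
    rw [hat_union hF ha hb, compl_union]
    exact ⟨hu, Subset.rfl⟩
  · refine eq_univ_of_forall fun u => ⟨(hat F ∅)ᶜ, ⟨_, ⟨∅, hF.empty_mem, rfl⟩, rfl⟩, ?_⟩
    exact u.empty_notMem
  · refine congrArg generateFrom (ext fun s => ?_)
    simp only [image_image, mem_image, eq_comm]
    rfl

theorem hat_eq_empty_iff (hF : IsSetLattice F) (hdis : IsDisjunctive F) (ha : a ∈ F) :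
    hat F a = ∅ ↔ a = ∅ := by
  rw [← subset_empty_iff, ← subset_empty_iff, ← hat_empty (F := F),
    hat_subset_hat_iff hF.toFiniteInter hdis ha hF.empty_mem]

theorem codisjoint_hat_iff (hF : IsSetLattice F) (hdis : IsDisjunctive F) (ha : a ∈ F)
    (hb : b ∈ F) : Codisjoint (hat F a) (hat F b) ↔ Codisjoint a b := by
  rw [codisjoint_iff_union_eq_univ, codisjoint_iff_union_eq_univ, ← univ_subset_iff,
    ← univ_subset_iff, ← hat_union hF ha hb, ← hat_univ,
    hat_subset_hat_iff hF.toFiniteInter hdis hF.univ_mem (hF.union_mem a ha b hb)]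

theorem isCodisjointExpansion_hat_iff (hF : IsSetLattice F) (hdis : IsDisjunctive F)
    {a b : ι → Set α} (ha : ∀ i, a i ∈ F) (hb : ∀ i, b i ∈ F) :
    IsCodisjointExpansion (hat F ∘ a) (hat F ∘ b) ↔ IsCodisjointExpansion a b :=
  and_congr (forall_congr' fun i => hat_subset_hat_iff hF.toFiniteInter hdis (ha i) (hb i))
    (forall₃_congr fun i j _ => codisjoint_hat_iff hF hdis (hb i) (hb j))

theorem remainder_mem [Finite ι] (hF : FiniteInter F) {b : ℕ → ι → Set α} (hb : ∀ i j, b i j ∈ F)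
    (n : ℕ) : remainder b n ∈ F := by
  induction n with
  | zero => exact remainder_zero b ▸ hF.univ_mem
  | succ n ih =>
    exact remainder_succ b n ▸ hF.inter_mem ih (iInter_mem_of_finiteInter hF (hb n))

theorem remainder_hat [Finite ι] (hF : FiniteInter F) {b : ℕ → ι → Set α} (hb : ∀ i j, b i j ∈ F)
    (n : ℕ) : remainder (fun i => hat F ∘ b i) n = hat F (remainder b n) := by
  induction n with
  | zero => rw [remainder_zero, remainder_zero, hat_univ]
  | succ n ih =>
    rw [remainder_succ, remainder_succ, ih,
      hat_inter (remainder_mem hF hb n) (iInter_mem_of_finiteInter hF (hb n)), hat_iInter (hb n)]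
    rfl

theorem isMCLattice_image_hat_iff (hF : IsSetLattice F) (hdis : IsDisjunctive F) {m : ℕ} :
    IsMCLattice m (hat F '' F) ↔ IsMCLattice m F := by
  have hempty {a : Fin m → Set α} (ha : ∀ j, a j ∈ F) :
      ⋂ j, hat F (a j) = ∅ ↔ ⋂ j, a j = ∅ := by
    rw [← hat_iInter ha,
      hat_eq_empty_iff hF hdis (iInter_mem_of_finiteInter hF.toFiniteInter ha)]
  have hrem {b : ℕ → Fin m → Set α} (hb : ∀ i j, b i j ∈ F) (n : ℕ) :
      remainder (fun i => hat F ∘ b i) n = ∅ ↔ remainder b n = ∅ := by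
    rw [remainder_hat hF.toFiniteInter hb,
      hat_eq_empty_iff hF hdis (remainder_mem hF.toFiniteInter hb n)]
  refine ⟨fun h a ha haempty => ?_, fun h a ha haempty => ?_⟩
  · obtain ⟨b, hb, hab, n, hn⟩ := h (fun i => hat F ∘ a i) (fun i j => mem_image_of_mem _ (ha i j))
      fun i => (hempty (ha i)).2 (haempty i)
    choose b' hb' hbb' using hb
    obtain rfl : (fun i => hat F ∘ b' i) = b := funext₂ hbb'
    exact ⟨b', hb', fun i => (isCodisjointExpansion_hat_iff hF hdis (ha i) (hb' i)).1 (hab i), n,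
      (hrem hb' n).1 hn⟩
  · choose a' ha' haa' using ha
    obtain rfl : (fun i => hat F ∘ a' i) = a := funext₂ haa'
    obtain ⟨b, hb, hab, n, hn⟩ := h a' ha' fun i => (hempty (ha' i)).1 (haempty i)
    exact ⟨fun i => hat F ∘ b i, fun i j => mem_image_of_mem _ (hb i j),
      fun i => (isCodisjointExpansion_hat_iff hF hdis (ha' i) (hb i)).2 (hab i), n,
      (hrem hb n).2 hn⟩

theorem isMCSpace_lUltra_iff (hF : IsSetLattice F) (hdis : IsDisjunctive F) {m : ℕ} :
    IsMCSpace m (LUltra F) ↔ IsMCLattice m F :=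
  have := compactSpace_lUltra hF.toFiniteInter
  (isMCSpace_iff_isMCLattice (finiteInter_image_hat hF.toFiniteInter)
    (isTopologicalBasis_compl_image_hat hF)).trans (isMCLattice_image_hat_iff hF hdis)

end Wallman

section Definability

variable {L : Language} {N : Type*} [L.Structure N] {A : Set N} {α β ι : Type*}
  {P Q : (α → N) → Prop}

/-- First-order definability, with parameters from `A`, of a predicate on assignments `α → N`. -/
def DefinablePred (L : Language) [L.Structure N] (A : Set N) (P : (α → N) → Prop) : Prop :=
  A.Definable L {v | P v}

namespace DefinablePred

theorem not (hP : DefinablePred L A P) : DefinablePred L A fun v => ¬P v :=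
  Definable.compl hP

theorem and (hP : DefinablePred L A P) (hQ : DefinablePred L A Q) :
    DefinablePred L A fun v => P v ∧ Q v :=
  Definable.inter hP hQ

theorem imp (hP : DefinablePred L A P) (hQ : DefinablePred L A Q) :
    DefinablePred L A fun v => P v → Q v :=
  Definable.himp hP hQ

theorem iff (hP : DefinablePred L A P) (hQ : DefinablePred L A Q) :
    DefinablePred L A fun v => P v ↔ Q v := by
  simpa only [iff_iff_implies_and_implies] using (hP.imp hQ).and (hQ.imp hP)

theorem forall_finite [Finite ι] {P : ι → (α → N) → Prop} (hP : ∀ i, DefinablePred L A (P i)) :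
    DefinablePred L A fun v => ∀ i, P i v := by
  simpa only [DefinablePred, ofPred_forall] using definable_iInter_of_finite hP

theorem comp {P : (β → N) → Prop} (hP : DefinablePred L A P) (f : β → α) :
    DefinablePred L A fun v : α → N => P (v ∘ f) :=
  Definable.preimage_comp f hP

theorem exists_tuple [Finite β] {P : (α → N) → (β → N) → Prop}
    (hP : DefinablePred L A fun w : α ⊕ β → N => P (w ∘ .inl) (w ∘ .inr)) :
    DefinablePred L A fun v => ∃ w, P v w := by
  simpa [DefinablePred] using! Definable.exists_of_finite hP

theorem forall_tuple [Finite β] {P : (α → N) → (β → N) → Prop}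
    (hP : DefinablePred L A fun w : α ⊕ β → N => P (w ∘ .inl) (w ∘ .inr)) :
    DefinablePred L A fun v => ∀ w, P v w := by
  simpa [DefinablePred] using! Definable.forall_of_finite hP

theorem exists_elem {P : (α → N) → N → Prop}
    (hP : DefinablePred L A fun w : α ⊕ Unit → N => P (w ∘ .inl) (w (.inr ()))) :
    DefinablePred L A fun v => ∃ x, P v x := by
  have h : DefinablePred L A fun v => ∃ w : Unit → N, P v (w ()) := exists_tuple hP
  simpa only [(Equiv.funUnique Unit N).symm.exists_congr_left] using! h

theorem forall_elem {P : (α → N) → N → Prop}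
    (hP : DefinablePred L A fun w : α ⊕ Unit → N => P (w ∘ .inl) (w (.inr ()))) :
    DefinablePred L A fun v => ∀ x, P v x := by
  have h : DefinablePred L A fun v => ∀ w : Unit → N, P v (w ()) := forall_tuple hP
  simpa only [(Equiv.funUnique Unit N).symm.forall_congr_left] using! h

end DefinablePred

theorem definableFun_comp {f : (β → N) → N} (hf : A.DefinableFun L f) (g : β → α) :
    A.DefinableFun L fun v : α → N => f (v ∘ g) :=
  Definable.preimage_comp (Option.map g) hf

theorem exists_mem_of_definablePred (M : L.ElementarySubstructure N) [Finite β]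
    {P : (β → N) → Prop} (hP : DefinablePred L (M : Set N) P) (h : ∃ w, P w) :
    ∃ w : β → N, (∀ b, w b ∈ M) ∧ P w := by
  obtain ⟨φ, hφ⟩ := definable_iff_exists_formula_sum.1 hP
  have hφP (w : β → N) : φ.Realize (Sum.elim (↑) w) ↔ P w := (Set.ext_iff.1 hφ w).symm
  have hN : (φ.iExs β).Realize ((↑) : M → N) :=
    Language.Formula.realize_iExs.2 (h.imp fun w => (hφP w).2)
  have hM : (φ.iExs β).Realize (id : M → M) := (M.subtype.map_formula _ _).1 hN
  obtain ⟨w, hw⟩ := Language.Formula.realize_iExs.1 hM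
  refine ⟨fun b => w b, fun b => (w b).2, (hφP _).1 ?_⟩
  have := (M.subtype.map_formula _ _).2 hw
  rwa [Sum.comp_elim] at this

end Definability

section Codes

variable {κ : Cardinal.{1}} {X x y t : ZFSet.{0}} {γ : Type*}

theorem heredLt_iff : HeredLt κ x ↔ Cardinal.mk x.toSet < κ ∧ ∀ y ∈ x, HeredLt κ y := by
  unfold HeredLt
  rw [WellFounded.fix_eq]

theorem HeredLt.of_mem (hx : HeredLt κ x) (hy : y ∈ x) : HeredLt κ y :=
  (heredLt_iff.1 hx).2 y hy

theorem HeredLt.of_subset (hx : HeredLt κ x) (hy : y ⊆ x) : HeredLt κ y :=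
  heredLt_iff.2 ⟨(Cardinal.mk_le_mk_of_subset fun _ hz => hy hz).trans_lt (heredLt_iff.1 hx).1,
    fun _ hz => hx.of_mem (hy hz)⟩

theorem eq_of_forall_hKappa_mem_iff {x y : HKappa κ}
    (h : ∀ z : HKappa κ, (z : ZFSet) ∈ (x : ZFSet) ↔ (z : ZFSet) ∈ (y : ZFSet)) : x = y :=
  Subtype.ext (ZFSet.ext fun z => ⟨fun hz => (h ⟨z, x.2.of_mem hz⟩).1 hz,
    fun hz => (h ⟨z, y.2.of_mem hz⟩).2 hz⟩)

theorem mem_codeSet {A : Set X.toSet} : y ∈ codeSet X A ↔ y ∈ Subtype.val '' A := by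
  simp only [codeSet, ZFSet.mem_sep, mem_image, Subtype.exists, exists_and_right, exists_eq_right,
    and_iff_right_iff_imp]
  exact fun h => h.1

theorem codeSet_subset (A : Set X.toSet) : codeSet X A ⊆ X :=
  ZFSet.sep_subset

theorem decodeSet_codeSet (A : Set X.toSet) : decodeSet X (codeSet X A) = A :=
  ext fun _ => mem_codeSet.trans Subtype.val_injective.mem_set_image

theorem mem_image_val_decodeSet : y ∈ Subtype.val '' decodeSet X t ↔ y ∈ X ∧ y ∈ t := by
  rw [decodeSet]
  exact Subtype.image_preimage_coe _ _ ▸ Iff.rfl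

theorem mem_image_val_iInter {ι : Type*} {s : ι → Set X.toSet} :
    y ∈ Subtype.val '' (⋂ i, s i) ↔ y ∈ X ∧ ∀ i, y ∈ Subtype.val '' s i := by
  refine ⟨?_, fun ⟨hy, h⟩ => ⟨⟨y, hy⟩, mem_iInter.2 fun i => ?_, rfl⟩⟩
  · rintro ⟨x, hx, rfl⟩
    exact ⟨x.2, fun i => mem_image_of_mem _ (mem_iInter.1 hx i)⟩
  · exact Subtype.val_injective.mem_set_image.1 (h i)

/-- The family of the objects decoded by `g` from the elements of the set `t`. -/
def decodeElems (g : ZFSet.{0} → γ) (t : ZFSet.{0}) : Set γ :=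
  g '' {y | y ∈ t}

/-- The family of subsets of `X` coded by the set `t`. -/
abbrev decodeFamily (X : ZFSet.{0}) : ZFSet.{0} → Set (Set X.toSet) :=
  decodeElems (decodeSet X)

/-- The collection of families of subsets of `X` coded by the set `t`. -/
abbrev decodeFamilies (X : ZFSet.{0}) : ZFSet.{0} → Set (Set (Set X.toSet)) :=
  decodeElems (decodeFamily X)

theorem exists_subset_decodeElems_eq {g : ZFSet.{0} → γ} {S : Set γ} (hS : S ⊆ decodeElems g x) :
    ∃ t ⊆ x, decodeElems g t = S := by
  refine ⟨x.sep (g · ∈ S), ZFSet.sep_subset, ext fun c => ⟨?_, fun hc => ?_⟩⟩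
  · rintro ⟨y, hy, rfl⟩
    exact (ZFSet.mem_sep.1 hy).2
  · obtain ⟨y, hy, rfl⟩ := hS hc
    exact ⟨y, ZFSet.mem_sep.2 ⟨hy, hc⟩, rfl⟩

theorem decodeSet_surjective (hX : HeredLt κ X) :
    Function.Surjective fun t : HKappa κ => decodeSet X t :=
  fun A => ⟨⟨codeSet X A, hX.of_subset (codeSet_subset A)⟩, decodeSet_codeSet A⟩

theorem decodeFamilies_surjective (hX : HeredLt κ X.powerset.powerset) :
    Function.Surjective fun t : HKappa κ => decodeFamilies X t := by
  intro Z
  have hpow (S : Set (Set X.toSet)) : S ⊆ decodeFamily X X.powerset := fun A _ =>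
    ⟨codeSet X A, ZFSet.mem_powerset.2 (codeSet_subset A), decodeSet_codeSet A⟩
  have hpowpow : Z ⊆ decodeFamilies X X.powerset.powerset := fun S _ =>
    (exists_subset_decodeElems_eq (hpow S)).imp fun t => And.imp_left ZFSet.mem_powerset.2
  obtain ⟨t, ht, htZ⟩ := exists_subset_decodeElems_eq hpowpow
  exact ⟨⟨t, hX.of_subset ht⟩, htZ⟩

theorem decodeFamily_opensZ [TopologicalSpace X.toSet] :
    decodeFamily X (opensZ X) = {U | IsOpen U} := by
  refine ext fun U => ⟨?_, fun hU => ?_⟩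
  · rintro ⟨t, ht, rfl⟩
    exact (ZFSet.mem_sep.1 ht).2
  · refine ⟨codeSet X U, ZFSet.mem_sep.2 ⟨ZFSet.mem_powerset.2 (codeSet_subset U), ?_⟩,
      decodeSet_codeSet U⟩
    rwa [decodeSet_codeSet]

end Codes

section DefinableSets

variable {κ : Cardinal.{1}} {X : ZFSet.{0}} {α β ι γ : Type*}
  {M : Language.graph.ElementarySubstructure (HKappa κ)} {s t : (α → HKappa κ) → Set X.toSet}
  {f g : (α → HKappa κ) → HKappa κ}

/-- Definability with parameters from `M` of a set-valued map, i.e. of the relation `x ∈ s v`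
between points of `X`, seen as elements of `H(κ)`, and assignments. -/
def DefinableSetFun (M : Language.graph.ElementarySubstructure (HKappa κ))
    (s : (α → HKappa κ) → Set X.toSet) : Prop :=
  DefinablePred Language.graph (M : Set (HKappa κ)) fun w : α ⊕ Unit → HKappa κ =>
    (w (.inr ()) : ZFSet) ∈ Subtype.val '' s (w ∘ .inl)

theorem definablePred_mem {A : Set (HKappa κ)} (hf : A.DefinableFun Language.graph f)
    (hg : A.DefinableFun Language.graph g) :
    DefinablePred Language.graph A fun v => (f v : ZFSet) ∈ (g v : ZFSet) := by
  have hmem : A.Definable Language.graph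
      {w : Fin 2 → HKappa κ | (w 0 : ZFSet) ∈ (w 1 : ZFSet)} :=
    (empty_definable_iff.2 ⟨Language.adj.formula₂ (.var 0) (.var 1),
      ext fun _ => Language.Formula.realize_rel₂.symm⟩).mono (empty_subset A)
  exact hmem.preimage_map (F := fun v => ![f v, g v]) (Fin.forall_fin_two.2 ⟨hf, hg⟩)

theorem definablePred_mem_of_memOf (hX : MemOf κ M X)
    (hf : (M : Set (HKappa κ)).DefinableFun Language.graph f) :
    DefinablePred Language.graph (M : Set (HKappa κ)) fun v => (f v : ZFSet) ∈ X :=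
  definablePred_mem hf (Language.graph.definableFun_const (a := ⟨X, hX.1⟩) α hX.2)

theorem DefinablePred.exists_mem_decodeElems {A : Set (HKappa κ)} {d : ZFSet.{0} → γ}
    {P : (α → HKappa κ) → γ → Prop} (hf : A.DefinableFun Language.graph f)
    (hP : DefinablePred Language.graph A fun w : α ⊕ Unit → HKappa κ =>
      P (w ∘ .inl) (d (w (.inr ())))) :
    DefinablePred Language.graph A fun v => ∃ c ∈ decodeElems d (f v), P v c := by
  have h : DefinablePred Language.graph A fun v =>
      ∃ y : HKappa κ, (y : ZFSet) ∈ (f v : ZFSet) ∧ P v (d y) :=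
    .exists_elem ((definablePred_mem (.proj _) (definableFun_comp hf _)).and hP)
  have hiff (v) : (∃ y : HKappa κ, (y : ZFSet) ∈ (f v : ZFSet) ∧ P v (d y)) ↔
      ∃ c ∈ decodeElems d (f v), P v c :=
    ⟨fun ⟨y, hy, hPy⟩ => ⟨d y, mem_image_of_mem d hy, hPy⟩,
      fun ⟨_, ⟨y, hy, hyc⟩, hPc⟩ => ⟨⟨y, (f v).2.of_mem hy⟩, hy, hyc ▸ hPc⟩⟩
  simpa only [hiff] using h

theorem DefinablePred.forall_mem_decodeElems {A : Set (HKappa κ)} {d : ZFSet.{0} → γ}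
    {P : (α → HKappa κ) → γ → Prop} (hf : A.DefinableFun Language.graph f)
    (hP : DefinablePred Language.graph A fun w : α ⊕ Unit → HKappa κ =>
      P (w ∘ .inl) (d (w (.inr ())))) :
    DefinablePred Language.graph A fun v => ∀ c ∈ decodeElems d (f v), P v c := by
  simpa only [not_exists, not_and, not_not] using
    (exists_mem_decodeElems (P := fun v c => ¬P v c) hf hP.not).not

namespace DefinableSetFun

theorem comp {s : (β → HKappa κ) → Set X.toSet} (hs : DefinableSetFun M s) (f : β → α) :
    DefinableSetFun M fun v : α → HKappa κ => s (v ∘ f) :=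
  DefinablePred.comp hs (Sum.map f id)

theorem decodeSet (hX : MemOf κ M X) (hf : (M : Set (HKappa κ)).DefinableFun Language.graph f) :
    DefinableSetFun M fun v => decodeSet X (f v) := by
  simpa only [DefinableSetFun, mem_image_val_decodeSet] using
    (definablePred_mem_of_memOf hX (.proj _)).and
      (definablePred_mem (.proj _) (definableFun_comp hf _))

theorem proj (hX : MemOf κ M X) (i : α) :
    DefinableSetFun M fun v : α → HKappa κ => _root_.decodeSet X (v i) :=
  decodeSet hX (.proj _)

theorem const (hX : MemOf κ M X) {a : Set X.toSet} (ha : MemOf κ M (codeSet X a)) :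
    DefinableSetFun M fun _ : α → HKappa κ => a := by
  simpa only [decodeSet_codeSet] using
    decodeSet hX (Language.graph.definableFun_const (a := ⟨codeSet X a, ha.1⟩) α ha.2)

theorem compl (hX : MemOf κ M X) (hs : DefinableSetFun M s) :
    DefinableSetFun M fun v => (s v)ᶜ := by
  simpa only [DefinableSetFun, image_compl_eq_range_sdiff_image Subtype.val_injective,
    Subtype.range_val] using! (definablePred_mem_of_memOf hX (.proj _)).and (DefinablePred.not hs)

theorem inter (hs : DefinableSetFun M s) (ht : DefinableSetFun M t) :
    DefinableSetFun M fun v => s v ∩ t v := by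
  simpa only [DefinableSetFun, image_inter Subtype.val_injective] using! DefinablePred.and hs ht

theorem union (hX : MemOf κ M X) (hs : DefinableSetFun M s) (ht : DefinableSetFun M t) :
    DefinableSetFun M fun v => s v ∪ t v := by
  simpa only [compl_inter, compl_compl] using ((hs.compl hX).inter (ht.compl hX)).compl hX

theorem iInter [Finite ι] (hX : MemOf κ M X) {s : ι → (α → HKappa κ) → Set X.toSet}
    (hs : ∀ i, DefinableSetFun M (s i)) : DefinableSetFun M fun v => ⋂ i, s i v := by
  simpa only [DefinableSetFun, mem_image_val_iInter] using
    (definablePred_mem_of_memOf hX (.proj _)).and (DefinablePred.forall_finite hs)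

theorem univ (hX : MemOf κ M X) :
    DefinableSetFun M fun _ : α → HKappa κ => (univ : Set X.toSet) := by
  simpa only [DefinableSetFun, image_univ, Subtype.range_val] using!
    definablePred_mem_of_memOf hX (.proj _)

theorem empty (hX : MemOf κ M X) :
    DefinableSetFun M fun _ : α → HKappa κ => (∅ : Set X.toSet) := by
  simpa only [compl_univ] using (univ hX).compl hX

theorem nonempty (hX : MemOf κ M X) (hs : DefinableSetFun M s) :
    DefinablePred Language.graph (M : Set (HKappa κ)) fun v => (s v).Nonempty := by
  have hiff (v) : (∃ y : HKappa κ, (y : ZFSet) ∈ Subtype.val '' s v) ↔ (s v).Nonempty :=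
    ⟨fun ⟨_, x, hx, _⟩ => ⟨x, hx⟩, fun ⟨x, hx⟩ => ⟨⟨x, hX.1.of_mem x.2⟩, x, hx, rfl⟩⟩
  simpa only [hiff] using
    DefinablePred.exists_elem (P := fun v y => (y : ZFSet) ∈ Subtype.val '' s v) hs

theorem eq_empty (hX : MemOf κ M X) (hs : DefinableSetFun M s) :
    DefinablePred Language.graph (M : Set (HKappa κ)) fun v => s v = ∅ := by
  simpa only [not_nonempty_iff_eq_empty] using (hs.nonempty hX).not

theorem disjoint (hX : MemOf κ M X) (hs : DefinableSetFun M s) (ht : DefinableSetFun M t) :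
    DefinablePred Language.graph (M : Set (HKappa κ)) fun v => Disjoint (s v) (t v) := by
  simpa only [disjoint_iff_inter_eq_empty] using (hs.inter ht).eq_empty hX

theorem subset (hX : MemOf κ M X) (hs : DefinableSetFun M s) (ht : DefinableSetFun M t) :
    DefinablePred Language.graph (M : Set (HKappa κ)) fun v => s v ⊆ t v := by
  simpa only [disjoint_compl_right_iff_subset] using hs.disjoint hX (ht.compl hX)

theorem codisjoint (hX : MemOf κ M X) (hs : DefinableSetFun M s) (ht : DefinableSetFun M t) :
    DefinablePred Language.graph (M : Set (HKappa κ)) fun v => Codisjoint (s v) (t v) := by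
  simpa only [disjoint_compl_compl_iff_codisjoint] using (hs.compl hX).disjoint hX (ht.compl hX)

theorem isCodisjointExpansion [Finite ι] (hX : MemOf κ M X)
    {a b : (α → HKappa κ) → ι → Set X.toSet} (ha : ∀ i, DefinableSetFun M fun v => a v i)
    (hb : ∀ i, DefinableSetFun M fun v => b v i) :
    DefinablePred Language.graph (M : Set (HKappa κ)) fun v =>
      IsCodisjointExpansion (a v) (b v) := by
  refine (DefinablePred.forall_finite fun i => (ha i).subset hX (hb i)).and ?_
  simpa only [Subtype.forall, Prod.forall] using! DefinablePred.forall_finite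
    fun k : {k : ι × ι // k.1 ≠ k.2} => (hb k.1.1).codisjoint hX (hb k.1.2)

theorem mem_decodeFamily (hX : MemOf κ M X) (hs : DefinableSetFun M s)
    (hf : (M : Set (HKappa κ)).DefinableFun Language.graph f) :
    DefinablePred Language.graph (M : Set (HKappa κ)) fun v => s v ∈ decodeFamily X (f v) := by
  have heq : DefinablePred Language.graph (M : Set (HKappa κ))
      fun w : α ⊕ Unit → HKappa κ => _root_.decodeSet X (w (.inr ())) = s (w ∘ .inl) := by
    simpa only [subset_antisymm_iff] using
      ((decodeSet hX (.proj _)).subset hX (hs.comp Sum.inl)).and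
        ((hs.comp Sum.inl).subset hX (decodeSet hX (.proj _)))
  simpa only [exists_eq_right] using
    DefinablePred.exists_mem_decodeElems (P := fun v c => c = s v) hf heq

theorem isClosed [TopologicalSpace X.toSet] (hX : MemOf κ M X) (hopens : MemOf κ M (opensZ X))
    (hs : DefinableSetFun M s) :
    DefinablePred Language.graph (M : Set (HKappa κ)) fun v => IsClosed (s v) := by
  have h := (hs.compl hX).mem_decodeFamily hX
    (Language.graph.definableFun_const (a := ⟨opensZ X, hopens.1⟩) α hopens.2)
  simpa only [decodeFamily_opensZ, mem_ofPred_eq, isOpen_compl_iff] using h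

end DefinableSetFun

end DefinableSets

section Traps

variable {Y : Type u} {m : ℕ} {F : Set (Set Y)}

/-- The `m`-tuple `a` of members of `F` leads from the family `O` to the family `O'`: whichever
codisjoint expansion of `a` in `F` is chosen, it cuts the members of `O` down to members of `O'`. -/
def Advances (F O : Set (Set Y)) (a : Fin m → Set Y) (O' : Set (Set Y)) : Prop :=
  (∀ j, a j ∈ F) ∧ ⋂ j, a j = ∅ ∧ ∀ c ∈ O, ∀ b : Fin m → Set Y, (∀ j, b j ∈ F) →
    IsCodisjointExpansion a b → c ∩ ⋂ j, b j ∈ O'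

/-- A collection of families of possible remainders in which one can move forever without reaching
the empty remainder. Unlike a sequence witnessing the failure of the `m`-C property, it can be
reflected to an elementary submodel as a single object. -/
def IsTrap (m : ℕ) (F : Set (Set Y)) (Z : Set (Set (Set Y))) : Prop :=
  (∃ O ∈ Z, univ ∈ O) ∧ ∀ O ∈ Z, ∅ ∉ O ∧ ∃ a : Fin m → Set Y, ∃ O' ∈ Z, Advances F O a O'

theorem Advances.mono {F' O O' : Set (Set Y)} {a : Fin m → Set Y} (h : Advances F O a O')
    (hF : F' ⊆ F) (ha : ∀ j, a j ∈ F') : Advances F' O a O' :=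
  ⟨ha, h.2.1, fun c hc b hb => h.2.2 c hc b fun j => hF (hb j)⟩

theorem IsTrap.not_isMCLattice {Z : Set (Set (Set Y))} (hZ : IsTrap m F Z) :
    ¬IsMCLattice m F := by
  obtain ⟨⟨O₀, hO₀, huniv⟩, hmove⟩ := hZ
  have hadvances (O : Z) : ∃ (a : Fin m → Set Y) (O' : Z), Advances F O a O' :=
    let ⟨a, O', hO', h⟩ := (hmove O O.2).2
    ⟨a, ⟨O', hO'⟩, h⟩
  choose a next hnext using hadvances
  let O (n : ℕ) : Z := next^[n] ⟨O₀, hO₀⟩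
  have hO (n : ℕ) : O (n + 1) = next (O n) := Function.iterate_succ_apply' next n _
  intro hMC
  obtain ⟨b, hb, hab, n, hn⟩ := hMC (fun i => a (O i)) (fun i => (hnext (O i)).1)
    fun i => (hnext (O i)).2.1
  have hrem (n : ℕ) : remainder b n ∈ (O n : Set (Set Y)) := by
    induction n with
    | zero => exact remainder_zero b ▸ huniv
    | succ n ih =>
      rw [remainder_succ, hO]
      exact (hnext (O n)).2.2 _ ih (b n) (hb n) (hab n)
  exact (hmove _ (O n).2).1 (hn ▸ hrem n)

theorem exists_isTrap_of_not_isMCLattice (huniv : univ ∈ F) (h : ¬IsMCLattice m F) :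
    ∃ Z, IsTrap m F Z := by
  unfold IsMCLattice at h
  push Not at h
  obtain ⟨a, ha, haempty, hbad⟩ := h
  let O (n : ℕ) : Set (Set Y) := {c | ∃ b : ℕ → Fin m → Set Y, (∀ i j, b i j ∈ F) ∧
    (∀ i, IsCodisjointExpansion (a i) (b i)) ∧ remainder b n = c}
  refine ⟨range O, ⟨O 0, mem_range_self 0, fun _ _ => univ, fun _ _ => huniv,
    fun i => isCodisjointExpansion_univ (a i), remainder_zero _⟩, forall_mem_range.2 fun n =>
    ⟨fun ⟨b, hb, hab, hn⟩ => (hbad b hb hab n).ne_empty hn, a n, O (n + 1), mem_range_self _,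
      ha n, haempty n, ?_⟩⟩
  rintro _ ⟨b, hb, hab, rfl⟩ b' hb' hab'
  refine ⟨Function.update b n b',
    (Function.forall_update_iff b fun _ b => ∀ j, b j ∈ F).2 ⟨hb', fun i _ => hb i⟩,
    (Function.forall_update_iff b fun i b => IsCodisjointExpansion (a i) b).2
      ⟨hab', fun i _ => hab i⟩, ?_⟩
  rw [remainder_succ, Function.update_self,
    remainder_congr fun i hi => Function.update_of_ne hi.ne _ _]

end Traps

section Reflection

variable {κ : Cardinal.{1}} {X : ZFSet.{0}} {α β : Type*} {A : Set (HKappa κ)}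
  {M : Language.graph.ElementarySubstructure (HKappa κ)}

theorem DefinablePred.exists_sets [Finite β] (hX : HeredLt κ X)
    {P : (α → HKappa κ) → (β → Set X.toSet) → Prop}
    (hP : DefinablePred Language.graph A fun w : α ⊕ β → HKappa κ =>
      P (w ∘ .inl) fun b => decodeSet X (w (.inr b))) :
    DefinablePred Language.graph A fun v => ∃ a, P v a := by
  simpa only [(decodeSet_surjective hX).comp_left.exists] using! DefinablePred.exists_tuple
    (P := fun v w => P v fun b => decodeSet X (w b)) hP

theorem DefinablePred.forall_sets [Finite β] (hX : HeredLt κ X)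
    {P : (α → HKappa κ) → (β → Set X.toSet) → Prop}
    (hP : DefinablePred Language.graph A fun w : α ⊕ β → HKappa κ =>
      P (w ∘ .inl) fun b => decodeSet X (w (.inr b))) :
    DefinablePred Language.graph A fun v => ∀ a, P v a := by
  simpa only [(decodeSet_surjective hX).comp_left.forall] using! DefinablePred.forall_tuple
    (P := fun v w => P v fun b => decodeSet X (w b)) hP

theorem memOf_codeSet_of_definable (hX : MemOf κ M X) {a : Set X.toSet}
    (ha : DefinableSetFun M fun _ : Unit → HKappa κ => a) : MemOf κ M (codeSet X a) := by
  obtain ⟨w, hwM, hw⟩ := exists_mem_of_definablePred M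
    (P := fun w : Unit → HKappa κ => ∀ y : HKappa κ,
      (y : ZFSet) ∈ (w () : ZFSet) ↔ (y : ZFSet) ∈ Subtype.val '' a)
    (.forall_elem ((definablePred_mem (.proj _) (.proj _)).iff ha))
    ⟨fun _ => ⟨codeSet X a, hX.1.of_subset (codeSet_subset a)⟩, fun _ => mem_codeSet⟩
  have hwa : w () = ⟨codeSet X a, hX.1.of_subset (codeSet_subset a)⟩ :=
    eq_of_forall_hKappa_mem_iff fun y => (hw y).trans mem_codeSet.symm
  exact ⟨_, hwa ▸ hwM ()⟩

variable [TopologicalSpace X.toSet]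

theorem isSetLattice_lfam (hX : MemOf κ M X) : IsSetLattice (Lfam X κ M) where
  univ_mem := ⟨isClosed_univ, memOf_codeSet_of_definable hX (.univ hX)⟩
  inter_mem _ ha _ hb := ⟨ha.1.inter hb.1, memOf_codeSet_of_definable hX
    (.inter (.const hX ha.2) (.const hX hb.2))⟩
  empty_mem := ⟨isClosed_empty, memOf_codeSet_of_definable hX (.empty hX)⟩
  union_mem _ ha _ hb := ⟨ha.1.union hb.1, memOf_codeSet_of_definable hX
    (.union hX (.const hX ha.2) (.const hX hb.2))⟩

theorem exists_mem_lfam_of_definablePred [Finite β] (hX : MemOf κ M X)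
    (hopens : MemOf κ M (opensZ X)) {P : (β → Set X.toSet) → Prop}
    (hP : DefinablePred Language.graph (M : Set (HKappa κ)) fun w : β → HKappa κ =>
      P fun i => decodeSet X (w i))
    (h : ∃ a, (∀ i, IsClosed (a i)) ∧ P a) : ∃ a, (∀ i, a i ∈ Lfam X κ M) ∧ P a := by
  obtain ⟨w, hwM, hw, hPw⟩ := exists_mem_of_definablePred M
    ((DefinablePred.forall_finite fun i => (DefinableSetFun.proj hX i).isClosed hX
      hopens).and hP)
    ((decodeSet_surjective hX.1).comp_left.exists.1 h)
  refine ⟨_, fun i => ⟨hw i, memOf_codeSet_of_definable hX (.decodeSet hX ?_)⟩, hPw⟩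
  exact Language.graph.definableFun_const _ (hwM i)

theorem isDisjunctive_lfam [T1Space X.toSet] (hX : MemOf κ M X) (hopens : MemOf κ M (opensZ X)) :
    IsDisjunctive (Lfam X κ M) := by
  intro a ha b hb hab
  obtain ⟨x, hxa, hxb⟩ := not_subset.1 hab
  have hproj := DefinableSetFun.proj (M := M) hX ()
  obtain ⟨c, hc, hne, hca, hcb⟩ := exists_mem_lfam_of_definablePred hX hopens (β := Unit)
    (P := fun c => (c ()).Nonempty ∧ c () ⊆ a ∧ Disjoint (c ()) b)
    ((hproj.nonempty hX).and ((hproj.subset hX (.const hX ha.2)).and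
      (hproj.disjoint hX (.const hX hb.2))))
    ⟨fun _ => {x}, fun _ => isClosed_singleton, singleton_nonempty x, singleton_subset_iff.2 hxa,
      disjoint_singleton_left.2 hxb⟩
  exact ⟨c (), hc (), hne, hca, hcb⟩

theorem isNormalLattice_lfam [NormalSpace X.toSet] (hX : MemOf κ M X)
    (hopens : MemOf κ M (opensZ X)) : IsNormalLattice (Lfam X κ M) := by
  intro a ha b hb hab
  obtain ⟨U, V, hU, hV, haU, hbV, hUV⟩ := normal_separation ha.1 hb.1 hab
  have hproj (i : Fin 2) := DefinableSetFun.proj (M := M) hX i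
  obtain ⟨c, hc, hcod, hac, hbc⟩ := exists_mem_lfam_of_definablePred hX hopens (β := Fin 2)
    (P := fun c => Codisjoint (c 0) (c 1) ∧ Disjoint a (c 0) ∧ Disjoint b (c 1))
    (((hproj 0).codisjoint hX (hproj 1)).and
      (((DefinableSetFun.const hX ha.2).disjoint hX (hproj 0)).and
        ((DefinableSetFun.const hX hb.2).disjoint hX (hproj 1))))
    ⟨![Uᶜ, Vᶜ], Fin.forall_fin_two.2 ⟨hU.isClosed_compl, hV.isClosed_compl⟩,
      disjoint_compl_compl_iff_codisjoint.1 (by simpa using hUV),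
      disjoint_compl_right_iff_subset.2 haU, disjoint_compl_right_iff_subset.2 hbV⟩
  exact ⟨c 0, hc 0, c 1, hc 1, hcod, hac, hbc⟩

end Reflection

section Transfer

variable {κ : Cardinal.{1}} {X : ZFSet.{0}} [TopologicalSpace X.toSet] {α : Type*} {m : ℕ}
  {M : Language.graph.ElementarySubstructure (HKappa κ)} {f g : (α → HKappa κ) → HKappa κ}

theorem definablePred_advances (hX : MemOf κ M X) (hopens : MemOf κ M (opensZ X))
    {a : (α → HKappa κ) → Fin m → Set X.toSet} (ha : ∀ j, DefinableSetFun M fun v => a v j)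
    (hf : (M : Set (HKappa κ)).DefinableFun Language.graph f)
    (hg : (M : Set (HKappa κ)).DefinableFun Language.graph g) :
    DefinablePred Language.graph (M : Set (HKappa κ)) fun v =>
      Advances {c | IsClosed c} (decodeFamily X (f v)) (a v) (decodeFamily X (g v)) := by
  refine (DefinablePred.forall_finite fun j => (ha j).isClosed hX hopens).and
    (((DefinableSetFun.iInter hX ha).eq_empty hX).and
      (.forall_mem_decodeElems hf (.forall_sets hX.1 ?_)))
  have hb (j : Fin m) := DefinableSetFun.proj (M := M) (α := (α ⊕ Unit) ⊕ Fin m) hX (.inr j)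
  exact (DefinablePred.forall_finite fun j => (hb j).isClosed hX hopens).imp
    ((DefinableSetFun.isCodisjointExpansion hX (fun j => ((ha j).comp Sum.inl).comp Sum.inl)
      hb).imp (((DefinableSetFun.proj hX _).inter (.iInter hX hb)).mem_decodeFamily hX
        (definableFun_comp (definableFun_comp hg _) _)))

theorem definablePred_isTrap (hX : MemOf κ M X) (hopens : MemOf κ M (opensZ X))
    (hf : (M : Set (HKappa κ)).DefinableFun Language.graph f) :
    DefinablePred Language.graph (M : Set (HKappa κ)) fun v =>
      IsTrap m {c | IsClosed c} (decodeFamilies X (f v)) := by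
  refine (DefinablePred.exists_mem_decodeElems hf ?_).and (.forall_mem_decodeElems hf
    (.and (.not ?_) (.exists_sets hX.1 (.exists_mem_decodeElems
      (definableFun_comp (definableFun_comp hf _) _) ?_))))
  · exact (DefinableSetFun.univ hX).mem_decodeFamily hX (.proj _)
  · exact (DefinableSetFun.empty hX).mem_decodeFamily hX (.proj _)
  · exact definablePred_advances hX hopens (fun j => .proj hX _) (.proj _) (.proj _)

theorem IsMCLattice.lfam (hX : MemOf κ M X) (hopens : MemOf κ M (opensZ X))
    (h : IsMCLattice m {c : Set X.toSet | IsClosed c}) : IsMCLattice m (Lfam X κ M) := by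
  intro a ha haempty
  obtain ⟨b, hb, hab, n, hn⟩ := h a (fun i j => (ha i j).1) haempty
  have hproj (k : Fin n × Fin m) := DefinableSetFun.proj (M := M) hX k
  obtain ⟨c, hc, hac, hcempty⟩ := exists_mem_lfam_of_definablePred hX hopens
    (P := fun c : Fin n × Fin m → Set X.toSet =>
      (∀ i : Fin n, IsCodisjointExpansion (a i) fun j => c (i, j)) ∧ ⋂ k, c k = ∅)
    ((DefinablePred.forall_finite fun i : Fin n => DefinableSetFun.isCodisjointExpansion hX
      (a := fun _ => a i) (fun j => .const hX (ha i j).2) fun j => hproj (i, j)).and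
        ((DefinableSetFun.iInter hX hproj).eq_empty hX))
    ⟨fun k => b k.1 k.2, fun k => hb k.1 k.2, fun i => hab i, subset_empty_iff.1
      (Subset.trans (fun x hx => mem_remainder.2 fun i hi j =>
        mem_iInter.1 hx (⟨i, hi⟩, j)) hn.subset)⟩
  refine ⟨fun i j => if hi : i < n then c (⟨i, hi⟩, j) else univ, fun i j => ?_, fun i => ?_, n,
    subset_empty_iff.1 (Subset.trans (fun x hx => mem_iInter.2 fun k => ?_) hcempty.subset)⟩
  · beta_reduce
    split_ifs with hi
    exacts [hc _, (isSetLattice_lfam hX).univ_mem]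
  · by_cases hi : i < n
    · simpa only [hi, dite_true] using hac ⟨i, hi⟩
    · simpa only [hi, dite_false] using isCodisjointExpansion_univ (a i)
  · simpa only [k.1.2, dite_true] using mem_remainder.1 hx k.1 k.1.2 k.2

theorem exists_mem_isTrap (hX : MemOf κ M X) (hopens : MemOf κ M (opensZ X))
    (hpow : HeredLt κ X.powerset.powerset) (h : ¬IsMCLattice m {c : Set X.toSet | IsClosed c}) :
    ∃ z ∈ M, IsTrap m {c | IsClosed c} (decodeFamilies X z) := by
  obtain ⟨Z, hZ⟩ := exists_isTrap_of_not_isMCLattice isClosed_univ h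
  obtain ⟨z, rfl⟩ := decodeFamilies_surjective hpow Z
  obtain ⟨w, hwM, hw⟩ := exists_mem_of_definablePred M (β := Unit)
    (definablePred_isTrap (f := fun w => w ()) hX hopens (.proj _)) ⟨fun _ => z, hZ⟩
  exact ⟨w (), hwM (), hw⟩

theorem exists_mem_advances (hX : MemOf κ M X) (hopens : MemOf κ M (opensZ X)) {z o : HKappa κ}
    (hz : z ∈ M) (ho : o ∈ M)
    (h : ∃ a : Fin m → Set X.toSet, ∃ O' ∈ decodeFamilies X z,
      Advances {c | IsClosed c} (decodeFamily X o) a O') :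
    ∃ a : Fin m → Set X.toSet, ∃ o' ∈ M, (o' : ZFSet) ∈ (z : ZFSet) ∧
      Advances (Lfam X κ M) (decodeFamily X o) a (decodeFamily X o') := by
  obtain ⟨a, _, ⟨o', ho'z, rfl⟩, hadv⟩ := h
  obtain ⟨t, rfl⟩ := (decodeSet_surjective hX.1).comp_left a
  have hproj (j : Fin m) := DefinableSetFun.proj (M := M) (α := Fin m ⊕ Unit) hX (.inl j)
  obtain ⟨w, hwM, hwz, hw⟩ := exists_mem_of_definablePred M
    (P := fun w : Fin m ⊕ Unit → HKappa κ => (w (.inr ()) : ZFSet) ∈ (z : ZFSet) ∧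
      Advances {c | IsClosed c} (decodeFamily X o) (fun j => decodeSet X (w (.inl j)))
        (decodeFamily X (w (.inr ()))))
    ((definablePred_mem (.proj _) (Language.graph.definableFun_const _ hz)).and
      (definablePred_advances hX hopens hproj (Language.graph.definableFun_const _ ho) (.proj _)))
    ⟨Sum.elim t fun _ => ⟨o', z.2.of_mem ho'z⟩, ho'z, hadv⟩
  refine ⟨_, w (.inr ()), hwM _, hwz, hw.mono (fun c hc => hc.1) fun j => ⟨hw.1 j, ?_⟩⟩
  exact memOf_codeSet_of_definable hX
    (.decodeSet hX (Language.graph.definableFun_const _ (hwM (.inl j))))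

theorem IsTrap.lfam (hX : MemOf κ M X) (hopens : MemOf κ M (opensZ X)) {z : HKappa κ} (hz : z ∈ M)
    (h : IsTrap m {c | IsClosed c} (decodeFamilies X z)) :
    IsTrap m (Lfam X κ M) {O | ∃ o ∈ M, (o : ZFSet) ∈ (z : ZFSet) ∧ decodeFamily X o = O} := by
  obtain ⟨⟨_, ⟨o, hoz, rfl⟩, huniv⟩, hmove⟩ := h
  obtain ⟨w, hwM, hwz, hw⟩ := exists_mem_of_definablePred M
    (P := fun w : Unit → HKappa κ => (w () : ZFSet) ∈ (z : ZFSet) ∧ univ ∈ decodeFamily X (w ()))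
    ((definablePred_mem (.proj _) (Language.graph.definableFun_const _ hz)).and
      ((DefinableSetFun.univ hX).mem_decodeFamily hX (.proj _)))
    ⟨fun _ => ⟨o, z.2.of_mem hoz⟩, hoz, huniv⟩
  refine ⟨⟨_, ⟨w (), hwM (), hwz, rfl⟩, hw⟩, ?_⟩
  rintro _ ⟨o, hoM, hoz, rfl⟩
  obtain ⟨hempty, hnext⟩ := hmove _ (mem_image_of_mem _ hoz)
  obtain ⟨a, o', ho'M, ho'z, hadv⟩ := exists_mem_advances hX hopens hz hoM hnext
  exact ⟨hempty, a, _, ⟨o', ho'M, ho'z, rfl⟩, hadv⟩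

theorem isMCLattice_isClosed_iff_lfam (hX : MemOf κ M X) (hopens : MemOf κ M (opensZ X))
    (hpow : HeredLt κ X.powerset.powerset) :
    IsMCLattice m {c : Set X.toSet | IsClosed c} ↔ IsMCLattice m (Lfam X κ M) := by
  refine ⟨IsMCLattice.lfam hX hopens, fun h => ?_⟩
  by_contra hnot
  obtain ⟨z, hzM, hz⟩ := exists_mem_isTrap hX hopens hpow hnot
  exact (hz.lfam hX hopens hzM).not_isMCLattice h

theorem isMCSpace_iff_lUltra_lfam [CompactSpace X.toSet] [T1Space X.toSet] (hX : MemOf κ M X)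
    (hopens : MemOf κ M (opensZ X)) (hpow : HeredLt κ X.powerset.powerset) :
    IsMCSpace m X.toSet ↔ IsMCSpace m (LUltra (Lfam X κ M)) := by
  rw [isMCSpace_iff_isMCLattice_isClosed, isMCLattice_isClosed_iff_lfam hX hopens hpow,
    isMCSpace_lUltra_iff (isSetLattice_lfam hX) (isDisjunctive_lfam hX hopens)]

theorem isMCSpace_iff_wallman_general (X : ZFSet.{0}) [TopologicalSpace X.toSet]
    [CompactSpace X.toSet] [T2Space X.toSet] (κ : Cardinal.{1})
    (hbig : HeredLt κ X.powerset.powerset)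
    (M : FirstOrder.Language.graph.ElementarySubstructure (HKappa κ))
    (hXM : MemOf κ M X) (htopM : MemOf κ M (opensZ X)) (m : ℕ) :
    (IsMCSpace m X.toSet ↔ IsMCSpace m (LUltra (Lfam X κ M))) ∧
      (WeaklyInfiniteDimensional X.toSet ↔ WeaklyInfiniteDimensional (LUltra (Lfam X κ M))) := by
  have hlattice := isSetLattice_lfam hXM
  have := compactSpace_lUltra hlattice.toFiniteInter
  have := t2Space_lUltra hlattice (isNormalLattice_lfam hXM htopM)
  refine ⟨isMCSpace_iff_lUltra_lfam hXM htopM hbig, ?_⟩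
  rw [← isMCSpace_two_iff_weaklyInfiniteDimensional, ← isMCSpace_two_iff_weaklyInfiniteDimensional]
  exact isMCSpace_iff_lUltra_lfam hXM htopM hbig

end Transfer

/-- For a compact Hausdorff space `X`, a countable elementary submodel
`M ≺ H(κ)` with `X ∈ M`, `L = 2^X ∩ M`, and `m ≥ 2`: `X` is an `m`-C-space iff `wL` is;
in particular (`m = 2`), `X` is weakly infinite dimensional iff `wL` is. -/
theorem isMCSpace_iff_wallman
    (X : ZFSet.{0}) [TopologicalSpace ↥X.toSet] [CompactSpace ↥X.toSet]
    [T2Space ↥X.toSet]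
    (κ : Cardinal.{1}) (hreg : κ.IsRegular) (hbig : HeredLt κ X.powerset.powerset)
    (M : FirstOrder.Language.graph.ElementarySubstructure (HKappa κ))
    (hMcount : Countable M) (hXM : MemOf κ M X) (htopM : MemOf κ M (opensZ X))
    (m : ℕ) (hm : 2 ≤ m) :
    (IsMCSpace m ↥X.toSet ↔ IsMCSpace m (LUltra (Lfam X κ M))) ∧
    (WeaklyInfiniteDimensional ↥X.toSet ↔
      WeaklyInfiniteDimensional (LUltra (Lfam X κ M))) :=
  isMCSpace_iff_wallman_general X κ hbig M hXM htopM m
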